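/- (First half of the proof of Theorem 2.) Let k ≥ 1, let q ≥ 1 be the integer with R·r_max^q ≤ c < R·r_max^{q−1}, and set ϵ_k := s·2^{s+1}·R·𝒬·r_max^k / r_min^{q·s}, where 𝒬 := R^{s−1} if s ≥ 1 and 𝒬 := c^{s−1} if s < 1. Let (x,d) ∈ 𝒜. Then there exist x', y ∈ A_k with d' := dist(x',y), together with z ∈ A_k ∩ B̄(x',d') satisfying i₁^z ≠ i₁^{x'}, such that (2d')^s/μ_k(B̄(x',d')) − (2d)^s/μ(B̄(x,d)) ≤ ϵ_k. -/

import Mathlib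

/-! Write `K = k + 1` and `δ = R * rmax ^ K`. Every cylinder `f_w(E)` with `w` of length `K` has
diameter at most `δ` and contains the cloud point `a_w = f_w(p_{w_K})`, whose mass under `μ_K` is
`r_w ^ s`, the weight of that cylinder in the `K`-fold self-similarity relation
`μ A = ∑_w r_w ^ s * μ (f_w⁻¹ A)` (`measure_iterate`).

Let `x'` be the cloud point of a level-`K` cylinder containing `x`, and let `y` be a cloud point
farthest from `x'` among those at distance at most `d + 2δ`. Then the ball `B' = B̄(x', d')`,
`d' = dist x' y`, contains `a_w` for every cylinder meeting `B̄(x, d)`, hence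
`μ (B̄(x, d)) ≤ μ_K B'`; for the same reason `B'` contains a cloud point `z` whose first letter
differs from that of `x'`. So the difference of the two quotients is at most
`((2d')^s - (2d)^s) / μ (B̄(x, d))`. Since `d' ≤ d + 2δ` and `d' ≤ R`, the mean value theorem bounds
the numerator by `s * 2^(s+1) * δ * 𝒬` (`rpow_gap`). Finally `μ (B̄(x, d)) ≥ rmin ^ (q s)`, because
`R * rmax ^ q ≤ c ≤ d` forces `B̄(x, d)` to contain a whole level-`q` cylinder. -/

open MeasureTheory Metric Set

noncomputable section

/-- Composition of the maps of the IFS along a word (list of letters). -/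
def fword {m : ℕ} {X : Type*} (f : Fin m → X → X) : List (Fin m) → X → X
  | [] => id
  | i :: w => f i ∘ fword f w

/-- Product of the contraction ratios along a word. -/
def rword {m : ℕ} (r : Fin m → ℝ) (w : List (Fin m)) : ℝ := (w.map r).prod

/-- The point clouds: `cloud f p k` is the set `A_{k+1}` of the paper
(`cloud f p 0 = A₁` is the set of fixed points). -/
def cloud {m : ℕ} {X : Type*} (f : Fin m → X → X) (p : Fin m → X) : ℕ → Set X
  | 0 => Set.range p
  | k + 1 => ⋃ i, f i '' cloud f p k

/-- The discrete measure: `muk f p r s k` is the measure `μ_{k+1}` of the paper,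
supported on `cloud f p k = A_{k+1}`. -/
def muk {m : ℕ} {X : Type*} [MeasurableSpace X] (f : Fin m → X → X) (p : Fin m → X)
    (r : Fin m → ℝ) (s : ℝ) (k : ℕ) : Measure X :=
  ∑ w : Fin (k + 1) → Fin m,
    ENNReal.ofReal ((∏ j, r (w j)) ^ s) •
      Measure.dirac (fword f (List.ofFn w) (p (w (Fin.last k))))

section Words

variable {m : ℕ} {X : Type*}

/-- The point `a_w = f_w(p_last)` carried by the word `w` of length `k + 1`. -/
def wordPoint (f : Fin m → X → X) (p : Fin m → X) {k : ℕ} (w : Fin (k + 1) → Fin m) : X :=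
  fword f (List.ofFn w) (p (w (Fin.last k)))

lemma fword_ofFn_succ (f : Fin m → X → X) {k : ℕ} (w : Fin (k + 1) → Fin m) (x : X) :
    fword f (List.ofFn w) x = f (w 0) (fword f (List.ofFn (fun j : Fin k => w j.succ)) x) := by
  rw [List.ofFn_succ]
  rfl

lemma wordPoint_mem_cloud (f : Fin m → X → X) (p : Fin m → X) (hp : ∀ i, f i (p i) = p i) :
    ∀ {k : ℕ} (w : Fin (k + 1) → Fin m), wordPoint f p w ∈ cloud f p k := by
  intro k
  induction k with
  | zero =>
    intro w
    refine ⟨w 0, ?_⟩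
    rw [wordPoint, fword_ofFn_succ]
    simp [fword, hp]
  | succ k ih =>
    intro w
    rw [wordPoint, fword_ofFn_succ]
    exact Set.mem_iUnion.2 ⟨w 0, _, ih (fun j => w j.succ), rfl⟩

lemma fword_mem (f : Fin m → X → X) (E : Set X) (hE : ∀ i, ∀ e ∈ E, f i e ∈ E) :
    ∀ (l : List (Fin m)) (e : X), e ∈ E → fword f l e ∈ E
  | [], _, he => he
  | i :: l, e, he => hE i _ (fword_mem f E hE l e he)

lemma exists_code (f : Fin m → X → X) (E : Set X) (hE : E = ⋃ i, f i '' E) (k : ℕ) :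
    ∀ x ∈ E, ∃ w : Fin k → Fin m, ∃ e ∈ E, x = fword f (List.ofFn w) e := by
  induction k with
  | zero => exact fun x hx => ⟨Fin.elim0, x, hx, by simp [fword]⟩
  | succ k ih =>
    intro x hx
    rw [hE] at hx
    obtain ⟨i, y, hy, rfl⟩ := Set.mem_iUnion.1 hx
    obtain ⟨w, e, he, rfl⟩ := ih y hy
    refine ⟨Fin.cons i w, e, he, ?_⟩
    rw [fword_ofFn_succ]
    simp

lemma dist_fword [PseudoMetricSpace X] (f : Fin m → X → X) (r : Fin m → ℝ)
    (hsim : ∀ i x y, dist (f i x) (f i y) = r i * dist x y) {k : ℕ} (w : Fin k → Fin m) (x y : X) :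
    dist (fword f (List.ofFn w) x) (fword f (List.ofFn w) y) = (∏ j, r (w j)) * dist x y := by
  induction k with
  | zero => simp [fword]
  | succ k ih =>
    rw [fword_ofFn_succ, fword_ofFn_succ, hsim, ih, Fin.prod_univ_succ, mul_assoc]

/-- The self-similarity relation iterated `k` times. -/
lemma measure_iterate [MeasurableSpace X] (f : Fin m → X → X) (hf : ∀ i, Measurable (f i))
    (r : Fin m → ℝ) (hr : ∀ i, 0 ≤ r i) (s : ℝ) (μ : Measure X)
    (hμ : ∀ A : Set X, MeasurableSet A →
      μ A = ∑ i, ENNReal.ofReal (r i ^ s) * μ (f i ⁻¹' A)) (k : ℕ) :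
    ∀ A : Set X, MeasurableSet A →
      μ A = ∑ w : Fin k → Fin m,
        ENNReal.ofReal ((∏ j, r (w j)) ^ s) * μ (fword f (List.ofFn w) ⁻¹' A) := by
  induction k with
  | zero => intro A _; simp [fword]
  | succ k ih =>
    intro A hA
    rw [hμ A hA, ← (Fin.consEquiv (fun _ => Fin m)).sum_comp, Fintype.sum_prod_type]
    refine Finset.sum_congr rfl fun i _ => ?_
    rw [ih _ (hf i hA), Finset.mul_sum]
    refine Finset.sum_congr rfl fun w _ => ?_
    have h1 : fword f (List.ofFn (Fin.consEquiv (fun _ => Fin m) (i, w))) ⁻¹' A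
        = fword f (List.ofFn w) ⁻¹' (f i ⁻¹' A) := by
      ext y
      simp only [Set.mem_preimage, fword_ofFn_succ]
      simp [Fin.consEquiv]
    rw [h1, Fin.prod_univ_succ, ← mul_assoc, ← ENNReal.ofReal_mul (Real.rpow_nonneg (hr i) s)]
    simp only [Fin.consEquiv, Equiv.coe_fn_mk, Fin.cons_zero, Fin.cons_succ]
    rw [Real.mul_rpow (hr i) (Finset.prod_nonneg fun j _ => hr _)]

end Words

/-- A contracting similitude mapping a nonempty compact set `E` into itself has its fixed point
in `E`. -/
lemma fixedPoint_mem {X : Type*} [MetricSpace X] (g : X → X) (ρ : ℝ) (hρ : ρ ∈ Set.Ioo (0 : ℝ) 1)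
    (hg : ∀ x y, dist (g x) (g y) = ρ * dist x y) (E : Set X) (hne : E.Nonempty)
    (hE : IsCompact E) (hmaps : ∀ e ∈ E, g e ∈ E) (a : X) (ha : g a = a) : a ∈ E := by
  -- The distance to `a` attains its minimum over `E`, and applying `g` strictly decreases it.
  obtain ⟨e, he, hmin⟩ := hE.exists_isMinOn hne
    (f := fun e => dist e a) (by fun_prop)
  have h1 : dist e a ≤ dist (g e) a := hmin (hmaps e he)
  have h2 : dist (g e) a = ρ * dist e a := by
    conv_lhs => rw [← ha]
    exact hg e a
  have h3 : dist e a = 0 := by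
    have := hρ.2
    have := dist_nonneg (x := e) (y := a)
    nlinarith
  rwa [← dist_eq_zero.1 h3]

/-- Mean value estimate for `t ↦ t ^ s` on `[d, d'] ⊆ [c, R]`. -/
lemma rpow_gap (s c R d d' δ : ℝ) (hs : 0 < s) (hc : 0 < c) (hcd : c ≤ d) (hdd : d < d')
    (hd'R : d' ≤ R) (hδ : d' ≤ d + 2 * δ) :
    (2 * d') ^ s - (2 * d) ^ s ≤
      s * (2 : ℝ) ^ (s + 1) * δ * (if 1 ≤ s then R ^ (s - 1) else c ^ (s - 1)) := by
  have hd : 0 < d := hc.trans_le hcd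
  obtain ⟨ξ, hξ, hξe⟩ := exists_hasDerivAt_eq_slope (fun t : ℝ => t ^ s)
    (fun t => s * t ^ (s - 1)) hdd
    (fun t ht => (Real.continuousAt_rpow_const t s (Or.inl (by linarith [ht.1]))).continuousWithinAt)
    (fun t ht => Real.hasDerivAt_rpow_const (Or.inl (by linarith [ht.1])))
  have hgap : d' ^ s - d ^ s = s * ξ ^ (s - 1) * (d' - d) := by
    rw [hξe, div_mul_cancel₀ _ (by linarith)]
  have hQ : ξ ^ (s - 1) ≤ (if 1 ≤ s then R ^ (s - 1) else c ^ (s - 1)) := by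
    split_ifs with h
    · exact Real.rpow_le_rpow (by linarith [hξ.1]) (by linarith [hξ.2]) (by linarith)
    · exact Real.rpow_le_rpow_of_nonpos hc (by linarith [hξ.1]) (by linarith)
  have hξ0 : 0 ≤ ξ ^ (s - 1) := Real.rpow_nonneg (by linarith [hξ.1]) _
  have h2 : (0 : ℝ) < 2 ^ s := Real.rpow_pos_of_pos two_pos s
  rw [Real.mul_rpow two_pos.le (by linarith), Real.mul_rpow two_pos.le hd.le, ← mul_sub, hgap,
    Real.rpow_add two_pos, Real.rpow_one]
  calc (2 : ℝ) ^ s * (s * ξ ^ (s - 1) * (d' - d))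
      ≤ 2 ^ s * (s * (if 1 ≤ s then R ^ (s - 1) else c ^ (s - 1)) * (2 * δ)) := by
        have hQ0 := hξ0.trans hQ
        gcongr
        linarith
    _ = _ := by ring

theorem stmt15
    (n m : ℕ) (hn : 1 ≤ n) (hm : 2 ≤ m)
    (f : Fin m → EuclideanSpace ℝ (Fin n) → EuclideanSpace ℝ (Fin n))
    (r : Fin m → ℝ) (hr : ∀ i, r i ∈ Set.Ioo (0 : ℝ) 1)
    (hsim : ∀ i x y, dist (f i x) (f i y) = r i * dist x y)
    (E : Set (EuclideanSpace ℝ (Fin n)))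
    (hEne : E.Nonempty) (hEcpt : IsCompact E)
    (hEinv : E = ⋃ i, f i '' E)
    (hssc : ∀ i j, i ≠ j → f i '' E ∩ f j '' E = ∅)
    (s : ℝ) (hs : 0 < s) (hsum : ∑ i, r i ^ s = 1)
    (μ : Measure (EuclideanSpace ℝ (Fin n)))
    (hμprob : IsProbabilityMeasure μ) (hμE : μ E = 1)
    (hμself : ∀ A : Set (EuclideanSpace ℝ (Fin n)), MeasurableSet A →
      μ A = ∑ i, ENNReal.ofReal (r i ^ s) * μ (f i ⁻¹' A))
    (p : Fin m → EuclideanSpace ℝ (Fin n)) (hp : ∀ i, f i (p i) = p i)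
    (rmin rmax : ℝ)
    (hrmin₁ : ∃ i, rmin = r i) (hrmin₂ : ∀ i, rmin ≤ r i)
    (hrmax₁ : ∃ i, rmax = r i) (hrmax₂ : ∀ i, r i ≤ rmax)
    (c R : ℝ) (hcpos : 0 < c)
    (hc : c = sInf {d : ℝ | ∃ i j, i ≠ j ∧ ∃ x ∈ f i '' E, ∃ y ∈ f j '' E, d = dist x y})
    (hR : R = Metric.diam E)
    (ι : EuclideanSpace ℝ (Fin n) → Fin m)
    (hι : ∀ x ∈ E, x ∈ f (ι x) '' E)
    (k q : ℕ) (hq1 : 1 ≤ q)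
    (hqdef : R * rmax ^ q ≤ c ∧ c < R * rmax ^ (q - 1)) :
    ∀ x ∈ E, ∀ d : ℝ, c ≤ d → d ≤ R →
      (∃ j, j ≠ ι x ∧ (Metric.closedBall x d ∩ f j '' E).Nonempty) →
      ∃ x' ∈ cloud f p k, ∃ y ∈ cloud f p k,
        ∃ z ∈ cloud f p k ∩ Metric.closedBall x' (dist x' y),
          ι z ≠ ι x' ∧
          (2 * dist x' y) ^ s / (muk f p r s k (Metric.closedBall x' (dist x' y))).toReal -
              (2 * d) ^ s / (μ (Metric.closedBall x d)).toReal ≤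
            s * (2 : ℝ) ^ (s + 1) * R *
            (if 1 ≤ s then R ^ (s - 1) else c ^ (s - 1)) *
            rmax ^ (k + 1) / rmin ^ ((q : ℝ) * s) := by
  intro x hx d hcd hdR ⟨j, hj, u, hub, huj⟩
  have hr0 : ∀ i, 0 < r i := fun i => (hr i).1
  have hrmin0 : 0 < rmin := by obtain ⟨i, rfl⟩ := hrmin₁; exact hr0 i
  have hrmax0 : 0 < rmax := by obtain ⟨i, rfl⟩ := hrmax₁; exact hr0 i
  have hR0 : 0 < R := hcpos.trans_le (hcd.trans hdR)
  have hmaps : ∀ i, ∀ e ∈ E, f i e ∈ E := fun i e he => by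
    rw [hEinv]
    exact Set.mem_iUnion.2 ⟨i, e, he, rfl⟩
  have hpE : ∀ i, p i ∈ E := fun i =>
    fixedPoint_mem (f i) (r i) (hr i) (hsim i) E hEne hEcpt (hmaps i) (p i) (hp i)
  have hfm : ∀ i, Measurable (f i) := fun i =>
    (LipschitzWith.of_dist_le_mul (K := ⟨r i, (hr0 i).le⟩)
      fun a b => (hsim i a b).le).continuous.measurable
  have hdiam : ∀ a ∈ E, ∀ b ∈ E, dist a b ≤ R := fun a ha b hb => by
    rw [hR]
    exact Metric.dist_le_diam_of_mem hEcpt.isBounded ha hb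
  have hιu : ∀ a ∈ E, ∀ i, a ∈ f i '' E → ι a = i := by
    intro a ha i hi
    by_contra hne
    have : a ∈ f (ι a) '' E ∩ f i '' E := ⟨hι a ha, hi⟩
    rw [hssc _ _ hne] at this
    exact this
  have hcyl : ∀ (l : ℕ) (w : Fin l → Fin m), ∀ a ∈ E, ∀ b ∈ E,
      dist (fword f (List.ofFn w) a) (fword f (List.ofFn w) b) ≤ R * rmax ^ l := by
    intro l w a ha b hb
    rw [dist_fword f r hsim, mul_comm]
    have hprod : ∏ t, r (w t) ≤ rmax ^ l := by
      calc ∏ t, r (w t) ≤ ∏ _t : Fin l, rmax :=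
            Finset.prod_le_prod (fun t _ => (hr0 _).le) (fun t _ => hrmax₂ _)
        _ = rmax ^ l := by simp
    exact mul_le_mul (hdiam a ha b hb) hprod (Finset.prod_nonneg fun t _ => (hr0 _).le) hR0.le
  have hwE : ∀ w : Fin (k + 1) → Fin m, wordPoint f p w ∈ E := fun w =>
    fword_mem f E hmaps _ _ (hpE _)
  have hfirst : ∀ (w : Fin (k + 1) → Fin m), ∀ e ∈ E, ι (fword f (List.ofFn w) e) = w 0 := by
    intro w e he
    refine hιu _ (fword_mem f E hmaps _ _ he) _ ?_
    rw [fword_ofFn_succ]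
    exact ⟨_, fword_mem f E hmaps _ _ he, rfl⟩
  set δ : ℝ := R * rmax ^ (k + 1) with hδ
  obtain ⟨w, e, he, hxe⟩ := exists_code f E hEinv (k + 1) x hx
  have hxx' : dist x (wordPoint f p w) ≤ δ := by
    rw [hxe]
    exact hcyl _ w _ he _ (hpE _)
  have hnear : ∀ v : Fin (k + 1) → Fin m, ∀ b ∈ E, fword f (List.ofFn v) b ∈ closedBall x d →
      dist (wordPoint f p w) (wordPoint f p v) ≤ d + 2 * δ := by
    intro v b hb hbx
    have h1 : dist (fword f (List.ofFn v) b) (wordPoint f p v) ≤ δ := hcyl _ v _ hb _ (hpE _)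
    have h2 := mem_closedBall.1 hbx
    have h3 := dist_triangle4 (wordPoint f p w) x (fword f (List.ofFn v) b) (wordPoint f p v)
    rw [dist_comm] at hxx' h2
    linarith
  -- `y = wordPoint f p v` is farthest from `x'` among the cloud points within `d + 2δ`.
  obtain ⟨v, hv, hvmax⟩ := Finset.exists_max_image
    (Finset.univ.filter fun v : Fin (k + 1) → Fin m =>
      dist (wordPoint f p w) (wordPoint f p v) ≤ d + 2 * δ)
    (fun v => dist (wordPoint f p w) (wordPoint f p v))
    ⟨w, by simpa using hnear w e he (by rw [← hxe]; exact mem_closedBall_self (by linarith))⟩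
  simp only [Finset.mem_filter, Finset.mem_univ, true_and] at hv hvmax
  obtain ⟨v', b, hb, hub'⟩ := exists_code f E hEinv (k + 1) u (by
    obtain ⟨b, hb, rfl⟩ := huj
    exact hmaps j b hb)
  have hv'0 : v' 0 = j := by
    rw [← hfirst v' b hb, ← hub']
    exact hιu u (by rw [hub']; exact fword_mem f E hmaps _ _ hb) j huj
  have hw0 : w 0 = ι x := by rw [hxe, hfirst w e he]
  refine ⟨wordPoint f p w, wordPoint_mem_cloud f p hp w, wordPoint f p v,
    wordPoint_mem_cloud f p hp v, wordPoint f p v', ⟨wordPoint_mem_cloud f p hp v', ?_⟩, ?_, ?_⟩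
  · rw [mem_closedBall']
    exact hvmax v' (hnear v' b hb (hub' ▸ hub))
  · rw [wordPoint, wordPoint, hfirst _ _ (hpE _), hfirst _ _ (hpE _), hv'0, hw0]
    exact hj
  set d' := dist (wordPoint f p w) (wordPoint f p v) with hd'
  have hEc : μ Eᶜ = 0 := by
    rw [prob_compl_eq_zero_iff hEcpt.measurableSet, hμE]
  have hiter := measure_iterate f hfm r (fun i => (hr0 i).le) s μ hμself
  have hle : μ (closedBall x d) ≤ muk f p r s k (closedBall (wordPoint f p w) d') := by
    rw [hiter (k + 1) _ measurableSet_closedBall, muk, Measure.finsetSum_apply]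
    refine Finset.sum_le_sum fun t _ => ?_
    rw [Measure.smul_apply, smul_eq_mul]
    refine mul_le_mul_right ?_ _
    by_cases ht : ∃ b ∈ E, fword f (List.ofFn t) b ∈ closedBall x d
    · obtain ⟨b, hb, hbx⟩ := ht
      have hmem : wordPoint f p t ∈ closedBall (wordPoint f p w) d' := by
        rw [mem_closedBall']
        exact hvmax t (hnear t b hb hbx)
      exact prob_le_one.trans (Measure.dirac_apply_of_mem hmem).ge
    · push Not at ht
      have hnull : μ (fword f (List.ofFn t) ⁻¹' closedBall x d) = 0 :=
        measure_mono_null (fun b hb hbE => ht b hbE hb) hEc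
      rw [hnull]
      exact zero_le
  have hfin : muk f p r s k (closedBall (wordPoint f p w) d') ≠ ⊤ := by
    rw [muk, Measure.finsetSum_apply]
    refine ENNReal.sum_ne_top.2 fun t _ => ?_
    rw [Measure.smul_apply, smul_eq_mul]
    exact ENNReal.mul_ne_top ENNReal.ofReal_ne_top (measure_ne_top _ _)
  have hlow : rmin ^ ((q : ℝ) * s) ≤ (μ (closedBall x d)).toReal := by
    obtain ⟨t, a, ha, hxa⟩ := exists_code f E hEinv q x hx
    have hsub : E ⊆ fword f (List.ofFn t) ⁻¹' closedBall x d := by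
      intro b hb
      rw [Set.mem_preimage, mem_closedBall, hxa]
      exact (hcyl q t b hb a ha).trans (hqdef.1.trans hcd)
    have hone : μ (fword f (List.ofFn t) ⁻¹' closedBall x d) = 1 :=
      le_antisymm prob_le_one (hμE ▸ measure_mono hsub)
    have h1 : ENNReal.ofReal ((∏ j, r (t j)) ^ s) ≤ μ (closedBall x d) := by
      rw [hiter q _ measurableSet_closedBall]
      refine le_trans ?_ (Finset.single_le_sum (fun _ _ => zero_le) (Finset.mem_univ t))
      rw [hone, mul_one]
    have h2 : (∏ j, r (t j)) ^ s ≤ (μ (closedBall x d)).toReal :=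
      (ENNReal.ofReal_le_iff_le_toReal (measure_ne_top _ _)).1 h1
    refine le_trans ?_ h2
    rw [Real.rpow_mul hrmin0.le, Real.rpow_natCast]
    refine Real.rpow_le_rpow (by positivity) ?_ hs.le
    calc rmin ^ q = ∏ _j : Fin q, rmin := by simp
      _ ≤ _ := Finset.prod_le_prod (fun _ _ => hrmin0.le) (fun _ _ => hrmin₂ _)
  have hleR : (μ (closedBall x d)).toReal ≤
      (muk f p r s k (closedBall (wordPoint f p w) d')).toReal := ENNReal.toReal_mono hfin hle
  have hρ0 : 0 < rmin ^ ((q : ℝ) * s) := Real.rpow_pos_of_pos hrmin0 _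
  have hμ0 : 0 < (μ (closedBall x d)).toReal := hρ0.trans_le hlow
  have hQ0 : 0 ≤ (if 1 ≤ s then R ^ (s - 1) else c ^ (s - 1)) := by
    split_ifs <;> positivity
  have hd'0 : 0 ≤ d' := dist_nonneg
  have hstep : (2 * d') ^ s / (muk f p r s k (closedBall (wordPoint f p w) d')).toReal -
      (2 * d) ^ s / (μ (closedBall x d)).toReal ≤
      ((2 * d') ^ s - (2 * d) ^ s) / (μ (closedBall x d)).toReal := by
    rw [sub_div]
    have : (2 * d') ^ s / (muk f p r s k (closedBall (wordPoint f p w) d')).toReal ≤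
        (2 * d') ^ s / (μ (closedBall x d)).toReal :=
      div_le_div_of_nonneg_left (by positivity) hμ0 hleR
    linarith
  refine hstep.trans ?_
  have hεeq : s * (2 : ℝ) ^ (s + 1) * R * (if 1 ≤ s then R ^ (s - 1) else c ^ (s - 1)) *
      rmax ^ (k + 1) = s * (2 : ℝ) ^ (s + 1) * δ *
        (if 1 ≤ s then R ^ (s - 1) else c ^ (s - 1)) := by
    rw [hδ]
    ring
  rw [hεeq]
  have hδ0 : 0 < δ := by positivity
  refine div_le_div₀ (by positivity) ?_ hρ0 hlow
  rcases le_or_gt d' d with h | h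
  · have : (2 * d') ^ s ≤ (2 * d) ^ s := Real.rpow_le_rpow (by positivity) (by linarith) hs.le
    have : 0 ≤ s * (2 : ℝ) ^ (s + 1) * δ * (if 1 ≤ s then R ^ (s - 1) else c ^ (s - 1)) := by
      positivity
    linarith
  · exact rpow_gap s c R d d' δ hs hcpos hcd h (hdiam _ (hwE w) _ (hwE v)) hv
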